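/- arXiv:2507.15160 — 4 statements merged into one kernel-verified Lean document; each statement's English description precedes it below -/
import Mathlib

section
/- (Rogers formula) Let a, b : ℕ → ℂ and R₁, R₂ > 0 be such that ∑_{n=0}^∞ a_n u^n converges absolutely for |u| < R₁ with sum f(u), and ∑_{m=0}^∞ b_m u^m converges absolutely for |u| < R₂ with sum g(u). Let λ, x, y, t, s be complex numbers with |λ| < 1, |y| < |x|, |t·x| < R₁, and |s·x| < R₂. Then ∑_{n=0}^∞ ∑_{m=0}^∞ a_n b_m · x^{n+m+1}/(x − λ^{n+m} y) · t^n s^m = ∑_{k=0}^∞ (y/x)^k f(λ^k t x) g(λ^k s x), where the left-hand side is an absolutely convergent double series. -/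
/-!
Each Lambert factor is the sum of a geometric series,
`x / (x - λ ^ (n + m) * y) = ∑ k, (λ ^ (n + m) * (y / x)) ^ k`, whose ratios are bounded by
`‖y / x‖ < 1` uniformly in `n` and `m`. The resulting triple series therefore converges absolutely
and may be summed over `k` last; for fixed `k` the factor `(λ ^ k) ^ (n + m)` dilates the arguments
of the two power series, and the inner double sum is their Cauchy product.
-/

section GeometricExpansion

variable {ι 𝕜 : Type*} [NormedDivisionRing 𝕜] {c w : ι → 𝕜} {r : ℝ}

lemma norm_inv_one_sub_le {z : 𝕜} (hr : r < 1) (hz : ‖z‖ ≤ r) : ‖(1 - z)⁻¹‖ ≤ (1 - r)⁻¹ := by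
  have h_lower : 1 - r ≤ ‖1 - z‖ := by
    have h_triangle := norm_sub_norm_le (1 : 𝕜) z
    rw [norm_one] at h_triangle
    linarith
  rw [norm_inv]
  exact inv_anti₀ (sub_pos.2 hr) h_lower

lemma summable_norm_mul_inv_one_sub (hc : Summable fun i => ‖c i‖) (hr : r < 1)
    (hw : ∀ i, ‖w i‖ ≤ r) : Summable fun i => ‖c i * (1 - w i)⁻¹‖ := by
  refine (hc.mul_right (1 - r)⁻¹).of_nonneg_of_le (fun _ => norm_nonneg _) fun i => ?_
  rw [norm_mul]
  gcongr
  exact norm_inv_one_sub_le hr (hw i)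

lemma summable_norm_mul_pow_prod (hc : Summable fun i => ‖c i‖) (hr₀ : 0 ≤ r) (hr : r < 1)
    (hw : ∀ i, ‖w i‖ ≤ r) : Summable fun p : ι × ℕ => ‖c p.1 * w p.1 ^ p.2‖ := by
  have h_bound : Summable fun p : ι × ℕ => ‖c p.1‖ * r ^ p.2 :=
    hc.mul_of_nonneg (summable_geometric_of_lt_one hr₀ hr) (fun _ => norm_nonneg _)
      fun k => pow_nonneg hr₀ k
  refine h_bound.of_nonneg_of_le (fun _ => norm_nonneg _) fun p => ?_
  rw [norm_mul, norm_pow]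
  gcongr
  exact hw p.1

lemma tsum_mul_inv_one_sub [CompleteSpace 𝕜] (hc : Summable fun i => ‖c i‖) (hr₀ : 0 ≤ r)
    (hr : r < 1) (hw : ∀ i, ‖w i‖ ≤ r) :
    ∑' i, c i * (1 - w i)⁻¹ = ∑' k : ℕ, ∑' i, c i * w i ^ k := by
  have h_summable : Summable (Function.uncurry fun i (k : ℕ) => c i * w i ^ k) :=
    (summable_norm_mul_pow_prod hc hr₀ hr hw).of_norm
  calc ∑' i, c i * (1 - w i)⁻¹
      = ∑' i, ∑' k : ℕ, c i * w i ^ k := tsum_congr fun i => by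
        rw [tsum_mul_left, tsum_geometric_of_norm_lt_one ((hw i).trans_lt hr)]
    _ = ∑' k : ℕ, ∑' i, c i * w i ^ k := h_summable.tsum_comm.symm

end GeometricExpansion

section Dilation

variable {𝕜 : Type*} [NormedDivisionRing 𝕜]

lemma norm_pow_mul_le_of_norm_le_one {l : 𝕜} (hl : ‖l‖ ≤ 1) (k : ℕ) (u : 𝕜) :
    ‖l ^ k * u‖ ≤ ‖u‖ := by
  rw [norm_mul, norm_pow]
  exact mul_le_of_le_one_left (norm_nonneg u) (pow_le_one₀ (norm_nonneg l) hl)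

lemma summable_norm_mul_pow_of_norm_le {a : ℕ → 𝕜} {u v : 𝕜}
    (ha : Summable fun n => ‖a n * u ^ n‖) (hvu : ‖v‖ ≤ ‖u‖) :
    Summable fun n => ‖a n * v ^ n‖ := by
  refine ha.of_nonneg_of_le (fun _ => norm_nonneg _) fun n => ?_
  simp only [norm_mul, norm_pow]
  gcongr

end Dilation

section LambertSeries

variable {𝕜 : Type*}

lemma lambert_term_eq_mul_inv_one_sub [Field 𝕜] {x : 𝕜} (hx : x ≠ 0) (α β y z t s : 𝕜)
    (n m : ℕ) :
    α * β * (x ^ (n + m + 1) / (x - z * y)) * t ^ n * s ^ m =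
      α * (t * x) ^ n * (β * (s * x) ^ m) * (1 - z * (y / x))⁻¹ := by
  have h_factor : x - z * y = x * (1 - z * (y / x)) := by field_simp
  have h_kernel : x ^ (n + m + 1) / (x - z * y) = x ^ (n + m) * (1 - z * (y / x))⁻¹ := by
    rw [h_factor, pow_succ', mul_div_mul_left _ _ hx, div_eq_mul_inv]
  rw [h_kernel]
  ring

variable [NormedField 𝕜]

lemma tsum_prod_mul_pow_add_pow [CompleteSpace 𝕜] {a b : ℕ → 𝕜} {u v l : 𝕜}
    (ha : Summable fun n => ‖a n * u ^ n‖) (hb : Summable fun m => ‖b m * v ^ m‖)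
    (hl : ‖l‖ ≤ 1) (q : 𝕜) (k : ℕ) :
    ∑' p : ℕ × ℕ, a p.1 * u ^ p.1 * (b p.2 * v ^ p.2) * (l ^ (p.1 + p.2) * q) ^ k =
      q ^ k * (∑' n, a n * (l ^ k * u) ^ n) * ∑' m, b m * (l ^ k * v) ^ m := by
  have ha_dilate := summable_norm_mul_pow_of_norm_le ha (norm_pow_mul_le_of_norm_le_one hl k u)
  have hb_dilate := summable_norm_mul_pow_of_norm_le hb (norm_pow_mul_le_of_norm_le_one hl k v)
  rw [mul_assoc, tsum_mul_tsum_of_summable_norm ha_dilate hb_dilate, ← tsum_mul_left]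
  exact tsum_congr fun p => by ring

theorem generalized_lambert_rogers_general [CompleteSpace 𝕜] {a b : ℕ → 𝕜} {l x y t s : 𝕜}
    (ha : Summable fun n => ‖a n * (t * x) ^ n‖) (hb : Summable fun m => ‖b m * (s * x) ^ m‖)
    (hl : ‖l‖ ≤ 1) (hyx : ‖y‖ < ‖x‖) :
    Summable (fun p : ℕ × ℕ =>
      ‖a p.1 * b p.2 * (x ^ (p.1 + p.2 + 1) / (x - l ^ (p.1 + p.2) * y)) *
        t ^ p.1 * s ^ p.2‖) ∧
    ∑' n : ℕ, ∑' m : ℕ, a n * b m *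
        (x ^ (n + m + 1) / (x - l ^ (n + m) * y)) * t ^ n * s ^ m
      = ∑' k : ℕ, (y / x) ^ k * (∑' n : ℕ, a n * (l ^ k * t * x) ^ n) *
          (∑' m : ℕ, b m * (l ^ k * s * x) ^ m) := by
  have hx_pos : 0 < ‖x‖ := (norm_nonneg y).trans_lt hyx
  have h_ratio : ‖y / x‖ < 1 := by rwa [norm_div, div_lt_one hx_pos]
  have h_ratios (p : ℕ × ℕ) : ‖l ^ (p.1 + p.2) * (y / x)‖ ≤ ‖y / x‖ :=
    norm_pow_mul_le_of_norm_le_one hl _ _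
  have h_coeff := ha.mul_norm hb
  have h_summable := summable_norm_mul_inv_one_sub h_coeff h_ratio h_ratios
  simp only [lambert_term_eq_mul_inv_one_sub (norm_pos_iff.1 hx_pos)]
  refine ⟨h_summable, ?_⟩
  rw [← h_summable.of_norm.tsum_prod,
    tsum_mul_inv_one_sub h_coeff (norm_nonneg _) h_ratio h_ratios]
  refine tsum_congr fun k => ?_
  rw [tsum_prod_mul_pow_add_pow ha hb hl, mul_assoc (l ^ k) t, mul_assoc (l ^ k) s]

end LambertSeries

/-- Rogers formula for generalized Lambert series. -/
theorem generalized_lambert_rogers (a b : ℕ → ℂ) (R₁ R₂ : ℝ)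
    (hR₁ : 0 < R₁) (hR₂ : 0 < R₂)
    (ha : ∀ u : ℂ, ‖u‖ < R₁ → Summable (fun n : ℕ => ‖a n * u ^ n‖))
    (hb : ∀ u : ℂ, ‖u‖ < R₂ → Summable (fun m : ℕ => ‖b m * u ^ m‖))
    (l x y t s : ℂ) (hl : ‖l‖ < 1) (hyx : ‖y‖ < ‖x‖)
    (htx : ‖t * x‖ < R₁) (hsx : ‖s * x‖ < R₂) :
    Summable (fun p : ℕ × ℕ =>
      ‖a p.1 * b p.2 * (x ^ (p.1 + p.2 + 1) / (x - l ^ (p.1 + p.2) * y)) *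
        t ^ p.1 * s ^ p.2‖) ∧
    ∑' n : ℕ, ∑' m : ℕ, a n * b m *
        (x ^ (n + m + 1) / (x - l ^ (n + m) * y)) * t ^ n * s ^ m
      = ∑' k : ℕ, (y / x) ^ k * (∑' n : ℕ, a n * (l ^ k * t * x) ^ n) *
          (∑' m : ℕ, b m * (l ^ k * s * x) ^ m) :=
  generalized_lambert_rogers_general (ha _ htx) (hb _ hsx) hl.le hyx
end

section
/- Let a : ℕ → ℂ and R > 0 be such that the power series ∑_{n=0}^∞ a_n u^n converges absolutely for |u| < R, with sum f(u). Let m ≥ 1 and let λ, x, y, z be complex numbers with |λ| < 1, |y| < |x|, and |x^m · z| < R. Then ∑_{n=0}^∞ a_n (x^{n+1}/(x − λ^n y))^m z^n = ∑_{(k₁,…,k_m) ∈ ℕ^m} (y/x)^{k₁+⋯+k_m} f(λ^{k₁+⋯+k_m} x^m z), where the right-hand side is an absolutely convergent sum over ℕ^m. -/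
/-!
With `w = (∏ i, x i) * z`, the `n`-th term of the left-hand side is
`a n * w ^ n * ∏ i, (1 - l i ^ n * (y i / x i))⁻¹`. Each of the finitely many factors is the sum of
a geometric series, so the term is a sum over multi-indices `k` of
`a n * w ^ n * ∏ i, (l i ^ n * (y i / x i)) ^ k i`. The double family is dominated by the product
of `∏ i, ‖y i / x i‖ ^ k i` and `‖a n * w ^ n‖`, so the order of summation may be exchanged, and
summing over `n` first gives the power series at `(∏ i, l i ^ k i) * w`.
-/

section ProductOfSeries

variable {R : Type*} [NormedCommRing R]

theorem prod_consEquiv {M : Type*} [CommMonoid M] {m : ℕ} {κ : Fin (m + 1) → Type*}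
    (f : ∀ i, κ i → M) (p : κ 0 × ∀ i : Fin m, κ i.succ) :
    ∏ i, f i (Fin.consEquiv κ p i) = f 0 p.1 * ∏ i : Fin m, f i.succ (p.2 i) := by
  simp only [Fin.consEquiv_apply, Fin.prod_univ_succ, Fin.cons_zero, Fin.cons_succ]

theorem prod_piCongrLeft {α β M : Type*} [Fintype α] [Fintype β] [CommMonoid M]
    {κ : β → Type*} (e : α ≃ β) (f : ∀ i, κ i → M) (k : ∀ i, κ (e i)) :
    ∏ i, f i (Equiv.piCongrLeft κ e k i) = ∏ i, f (e i) (k i) := by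
  simp only [← e.prod_comp, Equiv.piCongrLeft_apply_apply]

theorem summable_norm_prod_pi_fin {m : ℕ} {κ : Fin m → Type*} {f : ∀ i, κ i → R}
    (hf : ∀ i, Summable fun j => ‖f i j‖) :
    Summable fun k : ∀ i, κ i => ‖∏ i, f i (k i)‖ := by
  induction m with
  | zero => exact Summable.of_finite
  | succ m ih =>
    rw [← (Fin.consEquiv κ).summable_iff]
    simpa only [Function.comp_def, prod_consEquiv] using (hf 0).mul_norm (ih fun i => hf i.succ)

theorem summable_norm_prod_pi {ι : Type*} [Fintype ι] {κ : ι → Type*} {f : ∀ i, κ i → R}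
    (hf : ∀ i, Summable fun j => ‖f i j‖) :
    Summable fun k : ∀ i, κ i => ‖∏ i, f i (k i)‖ := by
  let e := (Fintype.equivFin ι).symm
  rw [← (Equiv.piCongrLeft κ e).summable_iff]
  simpa only [Function.comp_def, prod_piCongrLeft] using
    summable_norm_prod_pi_fin fun i => hf (e i)

theorem tsum_prod_pi_fin [CompleteSpace R] {m : ℕ} {κ : Fin m → Type*} {f : ∀ i, κ i → R}
    (hf : ∀ i, Summable fun j => ‖f i j‖) :
    ∑' k : ∀ i, κ i, ∏ i, f i (k i) = ∏ i, ∑' j, f i j := by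
  induction m with
  | zero => simp
  | succ m ih =>
    rw [← (Fin.consEquiv κ).tsum_eq, Fin.prod_univ_succ, ← ih fun i => hf i.succ,
      tsum_mul_tsum_of_summable_norm (hf 0) (summable_norm_prod_pi fun i => hf i.succ)]
    simp only [prod_consEquiv]

theorem tsum_prod_pi [CompleteSpace R] {ι : Type*} [Fintype ι] {κ : ι → Type*}
    {f : ∀ i, κ i → R} (hf : ∀ i, Summable fun j => ‖f i j‖) :
    ∑' k : ∀ i, κ i, ∏ i, f i (k i) = ∏ i, ∑' j, f i j := by
  let e := (Fintype.equivFin ι).symm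
  rw [← (Equiv.piCongrLeft κ e).tsum_eq, ← e.prod_comp]
  simpa only [prod_piCongrLeft] using tsum_prod_pi_fin fun i => hf (e i)

end ProductOfSeries

section MultiGeometric

variable {ι 𝕜 : Type*} [Fintype ι] [NormedField 𝕜] {q : ι → 𝕜}

theorem summable_norm_prod_pow (hq : ∀ i, ‖q i‖ < 1) :
    Summable fun k : ι → ℕ => ‖∏ i, q i ^ k i‖ :=
  summable_norm_prod_pi fun i => summable_norm_geometric_of_norm_lt_one (hq i)

theorem tsum_prod_pow [CompleteSpace 𝕜] (hq : ∀ i, ‖q i‖ < 1) :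
    ∑' k : ι → ℕ, ∏ i, q i ^ k i = ∏ i, (1 - q i)⁻¹ := by
  rw [tsum_prod_pi fun i => summable_norm_geometric_of_norm_lt_one (hq i)]
  simp only [tsum_geometric_of_norm_lt_one (hq _)]

theorem tsum_prod_pow_mul_prod_pow_pow [CompleteSpace 𝕜] {l : ι → 𝕜} (hq : ∀ i, ‖q i‖ < 1)
    (hl : ∀ i, ‖l i‖ ≤ 1) (n : ℕ) :
    ∑' k : ι → ℕ, (∏ i, q i ^ k i) * (∏ i, l i ^ k i) ^ n = ∏ i, (1 - l i ^ n * q i)⁻¹ := by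
  have hlq (i : ι) : ‖l i ^ n * q i‖ < 1 := by
    rw [norm_mul, norm_pow]
    exact mul_lt_one_of_nonneg_of_lt_one_right (pow_le_one₀ (norm_nonneg _) (hl i))
      (norm_nonneg _) (hq i)
  rw [← tsum_prod_pow hlq]
  refine tsum_congr fun k => ?_
  rw [← Finset.prod_pow, ← Finset.prod_mul_distrib]
  refine Finset.prod_congr rfl fun i _ => ?_
  rw [mul_pow, pow_right_comm, mul_comm]

end MultiGeometric

section WeightedPowerSeries

variable {κ 𝕜 : Type*} [NormedField 𝕜] {b : ℕ → 𝕜} {c u : κ → 𝕜}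

theorem summable_norm_mul_mul_pow (hc : Summable fun k => ‖c k‖) (hb : Summable fun n => ‖b n‖)
    (hu : ∀ k, ‖u k‖ ≤ 1) :
    Summable fun p : κ × ℕ => ‖c p.1 * (b p.2 * u p.1 ^ p.2)‖ := by
  refine (hc.mul_norm hb).of_nonneg_of_le (fun _ => norm_nonneg _) fun ⟨k, n⟩ => ?_
  rw [← mul_assoc, norm_mul _ (u k ^ n), norm_pow]
  exact mul_le_of_le_one_right (norm_nonneg _) (pow_le_one₀ (norm_nonneg _) (hu k))

theorem summable_norm_mul_tsum_mul_pow (hc : Summable fun k => ‖c k‖)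
    (hb : Summable fun n => ‖b n‖) (hu : ∀ k, ‖u k‖ ≤ 1) :
    Summable fun k => ‖c k * ∑' n, b n * u k ^ n‖ := by
  have hsum := summable_norm_mul_mul_pow hc hb hu
  refine hsum.prod.of_nonneg_of_le (fun _ => norm_nonneg _) fun k => ?_
  rw [← tsum_mul_left]
  exact norm_tsum_le_tsum_norm (hsum.prod_factor k)

theorem tsum_mul_tsum_mul_pow_comm [CompleteSpace 𝕜] (hc : Summable fun k => ‖c k‖)
    (hb : Summable fun n => ‖b n‖) (hu : ∀ k, ‖u k‖ ≤ 1) :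
    ∑' k, c k * ∑' n, b n * u k ^ n = ∑' n, b n * ∑' k, c k * u k ^ n := by
  have hsum : Summable (Function.uncurry fun k n => c k * (b n * u k ^ n)) :=
    (summable_norm_mul_mul_pow hc hb hu).of_norm
  simp only [← tsum_mul_left]
  rw [← hsum.tsum_comm]
  simp only [mul_left_comm]

end WeightedPowerSeries

theorem pow_succ_div_sub_mul {𝕜 : Type*} [Field 𝕜] {x : 𝕜} (hx : x ≠ 0) (t y : 𝕜) (n : ℕ) :
    x ^ (n + 1) / (x - t * y) = x ^ n * (1 - t * (y / x))⁻¹ := by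
  have hfactor : x - t * y = x * (1 - t * (y / x)) := by field_simp
  rw [hfactor, pow_succ', mul_div_mul_left _ _ hx, div_eq_mul_inv]

theorem multivariate_generalized_lambert_power_general {ι 𝕜 : Type*} [Fintype ι] [NormedField 𝕜]
    [CompleteSpace 𝕜] {a : ℕ → 𝕜} {l x y : ι → 𝕜} {z : 𝕜}
    (ha : Summable fun n => ‖a n * ((∏ i, x i) * z) ^ n‖)
    (hl : ∀ i, ‖l i‖ ≤ 1) (hyx : ∀ i, ‖y i‖ < ‖x i‖) :
    Summable (fun k : ι → ℕ =>
      ‖(∏ i, (y i / x i) ^ k i) * ∑' j, a j * ((∏ i, l i ^ k i) * (∏ i, x i) * z) ^ j‖) ∧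
    ∑' n, a n * (∏ i, x i ^ (n + 1) / (x i - l i ^ n * y i)) * z ^ n
      = ∑' k : ι → ℕ, (∏ i, (y i / x i) ^ k i) *
          ∑' j, a j * ((∏ i, l i ^ k i) * (∏ i, x i) * z) ^ j := by
  have hx_pos (i : ι) : 0 < ‖x i‖ := (norm_nonneg _).trans_lt (hyx i)
  have hq (i : ι) : ‖y i / x i‖ < 1 := by
    rw [norm_div, div_lt_one (hx_pos i)]
    exact hyx i
  have hc := summable_norm_prod_pow hq
  have hu (k : ι → ℕ) : ‖∏ i, l i ^ k i‖ ≤ 1 := by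
    simp only [norm_prod, norm_pow]
    exact Finset.prod_le_one (fun _ _ => by positivity)
      fun i _ => pow_le_one₀ (norm_nonneg _) (hl i)
  have hscale (t : 𝕜) (j : ℕ) :
      a j * (t * (∏ i, x i) * z) ^ j = a j * ((∏ i, x i) * z) ^ j * t ^ j := by ring
  simp only [hscale]
  refine ⟨summable_norm_mul_tsum_mul_pow hc ha hu, ?_⟩
  rw [tsum_mul_tsum_mul_pow_comm hc ha hu]
  refine tsum_congr fun n => ?_
  simp only [tsum_prod_pow_mul_prod_pow_pow hq hl,
    pow_succ_div_sub_mul (norm_pos_iff.mp (hx_pos _)), Finset.prod_mul_distrib, Finset.prod_pow]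
  ring

/-- Power specialization of the multivariate generalized Lambert series. -/
theorem multivariate_generalized_lambert_power (a : ℕ → ℂ) (R : ℝ) (hR : 0 < R)
    (ha : ∀ u : ℂ, ‖u‖ < R → Summable (fun n : ℕ => ‖a n * u ^ n‖))
    (m : ℕ) (hm : 1 ≤ m) (l x y z : ℂ)
    (hl : ‖l‖ < 1) (hyx : ‖y‖ < ‖x‖) (hxz : ‖x ^ m * z‖ < R) :
    Summable (fun k : Fin m → ℕ =>
      ‖(y / x) ^ (∑ i, k i) *
        ∑' j : ℕ, a j * (l ^ (∑ i, k i) * x ^ m * z) ^ j‖) ∧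
    ∑' n : ℕ, a n * (x ^ (n + 1) / (x - l ^ n * y)) ^ m * z ^ n
      = ∑' k : Fin m → ℕ, (y / x) ^ (∑ i, k i) *
          ∑' j : ℕ, a j * (l ^ (∑ i, k i) * x ^ m * z) ^ j := by
  simpa only [Finset.prod_pow_eq_pow_sum, Fin.prod_const] using
    multivariate_generalized_lambert_power_general (ι := Fin m) (a := a) (z := z)
      (by simpa only [Fin.prod_const] using ha _ hxz) (fun _ => hl.le) (fun _ => hyx)
end

section
/- Let λ, x, y, t, s be complex numbers with |λ| < 1, |y| < |x|, |t·x| < 1, and |s·x| < 1. Then ∑_{n=0}^∞ ∑_{m=0}^∞ x^{n+m+1}/(x − λ^{n+m} y) · t^n s^m = ∑_{k=0}^∞ (y/x)^k / ((1 − λ^k t x)(1 − λ^k s x)), where the left-hand side is an absolutely convergent double series. -/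
/-!
Since `‖l ^ (n + m) * (y / x)‖ < 1`, the factor `x / (x - l ^ (n + m) * y)` is the sum of the
geometric series `∑ k, (l ^ (n + m) * (y / x)) ^ k`. The resulting triple series converges
absolutely, so the sum over `k` may be taken last. For fixed `k` the weight
`(l ^ (n + m)) ^ k = (l ^ k) ^ n * (l ^ k) ^ m` splits, so the sum over `(n, m)` is a product of two
power series, evaluated at `l ^ k * t * x` and `l ^ k * s * x`.
-/

section NormBounds

theorem norm_pow_le_one {R : Type*} [SeminormedRing R] [NormOneClass R] {w : R} (hw : ‖w‖ ≤ 1)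
    (n : ℕ) : ‖w ^ n‖ ≤ 1 :=
  (norm_pow_le w n).trans (pow_le_one₀ (norm_nonneg w) hw)

theorem norm_mul_lt_one {R : Type*} [NonUnitalSeminormedRing R] {w z : R} (hw : ‖w‖ ≤ 1)
    (hz : ‖z‖ < 1) : ‖w * z‖ < 1 :=
  (norm_mul_le w z).trans_lt (mul_lt_one_of_nonneg_of_lt_one_right hw (norm_nonneg z) hz)

theorem norm_div_lt_one {K : Type*} [NormedDivisionRing K] {y x : K} (hyx : ‖y‖ < ‖x‖) :
    ‖y / x‖ < 1 := by
  rwa [norm_div, div_lt_one ((norm_nonneg y).trans_lt hyx)]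

theorem one_sub_norm_le_norm_one_sub_mul {R : Type*} [SeminormedRing R] [NormOneClass R]
    {c : R} (hc : ‖c‖ ≤ 1) (q : R) : 1 - ‖q‖ ≤ ‖1 - c * q‖ := calc
  1 - ‖q‖ ≤ ‖(1 : R)‖ - ‖c * q‖ := by
    rw [norm_one]
    exact sub_le_sub_left
      ((norm_mul_le c q).trans (mul_le_of_le_one_left (norm_nonneg q) hc)) 1
  _ ≤ ‖1 - c * q‖ := norm_sub_norm_le _ _

end NormBounds

section WeightedGeometric

variable {ι : Type*}

theorem summable_norm_div_one_sub_mul {K : Type*} [NormedDivisionRing K] {f c : ι → K} {q : K}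
    (hf : Summable fun i => ‖f i‖) (hc : ∀ i, ‖c i‖ ≤ 1) (hq : ‖q‖ < 1) :
    Summable fun i => ‖f i / (1 - c i * q)‖ := by
  refine (hf.div_const (1 - ‖q‖)).of_nonneg_of_le (fun _ => norm_nonneg _) fun i => ?_
  rw [norm_div]
  exact div_le_div_of_nonneg_left (norm_nonneg _) (sub_pos.mpr hq)
    (one_sub_norm_le_norm_one_sub_mul (hc i) q)

theorem summable_mul_mul_pow {R : Type*} [NormedRing R] [NormOneClass R] [CompleteSpace R]
    {f c : ι → R} {q : R} (hf : Summable fun i => ‖f i‖) (hc : ∀ i, ‖c i‖ ≤ 1) (hq : ‖q‖ < 1) :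
    Summable fun p : ι × ℕ => f p.1 * (c p.1 * q) ^ p.2 := by
  have hmajorant : Summable fun p : ι × ℕ => ‖f p.1‖ * ‖q‖ ^ p.2 :=
    hf.mul_of_nonneg (summable_geometric_of_lt_one (norm_nonneg q) hq)
      (fun _ => norm_nonneg _) (fun _ => by positivity)
  refine hmajorant.of_norm_bounded fun ⟨i, k⟩ => ?_
  have hcq : ‖c i * q‖ ≤ ‖q‖ :=
    (norm_mul_le _ _).trans (mul_le_of_le_one_left (norm_nonneg q) (hc i))
  calc
    ‖f i * (c i * q) ^ k‖ ≤ ‖f i‖ * ‖(c i * q) ^ k‖ := norm_mul_le _ _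
    _ ≤ ‖f i‖ * ‖c i * q‖ ^ k := by gcongr; exact norm_pow_le _ _
    _ ≤ ‖f i‖ * ‖q‖ ^ k := by gcongr

theorem tsum_div_one_sub_mul {𝕜 : Type*} [NormedField 𝕜] [CompleteSpace 𝕜] {f c : ι → 𝕜} {q : 𝕜}
    (hf : Summable fun i => ‖f i‖) (hc : ∀ i, ‖c i‖ ≤ 1) (hq : ‖q‖ < 1) :
    ∑' i, f i / (1 - c i * q) = ∑' k : ℕ, q ^ k * ∑' i, f i * c i ^ k := calc
  ∑' i, f i / (1 - c i * q) = ∑' i, ∑' k : ℕ, f i * (c i * q) ^ k := by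
    refine tsum_congr fun i => ?_
    rw [tsum_mul_left, div_eq_mul_inv, tsum_geometric_of_norm_lt_one (norm_mul_lt_one (hc i) hq)]
  _ = ∑' k : ℕ, ∑' i, f i * (c i * q) ^ k :=
    ((summable_mul_mul_pow hf hc hq).tsum_comm (f := fun i k => f i * (c i * q) ^ k)).symm
  _ = ∑' k : ℕ, q ^ k * ∑' i, f i * c i ^ k := by
    refine tsum_congr fun k => ?_
    rw [← tsum_mul_left]
    exact tsum_congr fun i => by ring

end WeightedGeometric

section PowerSeriesProduct

theorem summable_norm_mul_pow {R : Type*} [SeminormedRing R] [NormOneClass R] {u : ℕ → R} {w : R}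
    (hu : Summable fun n => ‖u n‖) (hw : ‖w‖ ≤ 1) : Summable fun n => ‖u n * w ^ n‖ :=
  hu.of_nonneg_of_le (fun _ => norm_nonneg _) fun n =>
    (norm_mul_le _ _).trans (mul_le_of_le_one_right (norm_nonneg _) (norm_pow_le_one hw n))

theorem tsum_mul_mul_pow_add {R : Type*} [NormedCommRing R] [NormOneClass R] [CompleteSpace R]
    {u v : ℕ → R} {w : R} (hu : Summable fun n => ‖u n‖) (hv : Summable fun m => ‖v m‖)
    (hw : ‖w‖ ≤ 1) :
    ∑' p : ℕ × ℕ, u p.1 * v p.2 * w ^ (p.1 + p.2) =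
      (∑' n, u n * w ^ n) * ∑' m, v m * w ^ m := by
  have huw : Summable fun n => ‖u n * w ^ n‖ := summable_norm_mul_pow hu hw
  have hvw : Summable fun m => ‖v m * w ^ m‖ := summable_norm_mul_pow hv hw
  rw [tsum_mul_tsum_of_summable_norm huw hvw]
  exact tsum_congr fun p => by ring

end PowerSeriesProduct

section LambertRogers

theorem lambert_rogers_term_eq {K : Type*} [Field K] {x : K} (hx : x ≠ 0) (α β l y t s : K)
    (n m : ℕ) :
    α * β * (x ^ (n + m + 1) / (x - l ^ (n + m) * y) * t ^ n * s ^ m) =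
      α * (t * x) ^ n * (β * (s * x) ^ m) / (1 - l ^ (n + m) * (y / x)) := by
  have hden : x - l ^ (n + m) * y = x * (1 - l ^ (n + m) * (y / x)) := by field_simp
  rw [hden, pow_succ', mul_div_mul_left _ _ hx]
  ring

variable {𝕜 : Type*} [NormedField 𝕜] {a b : ℕ → 𝕜} {l x y t s : 𝕜}

theorem summable_norm_lambert_rogers (hl : ‖l‖ ≤ 1) (hyx : ‖y‖ < ‖x‖)
    (ha : Summable fun n => ‖a n * (t * x) ^ n‖) (hb : Summable fun m => ‖b m * (s * x) ^ m‖) :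
    Summable fun p : ℕ × ℕ => ‖a p.1 * b p.2 *
      (x ^ (p.1 + p.2 + 1) / (x - l ^ (p.1 + p.2) * y) * t ^ p.1 * s ^ p.2)‖ := by
  have hx : x ≠ 0 := norm_pos_iff.mp ((norm_nonneg y).trans_lt hyx)
  have hab := ha.mul_norm hb
  have hweight (p : ℕ × ℕ) : ‖l ^ (p.1 + p.2)‖ ≤ 1 := norm_pow_le_one hl _
  simp only [lambert_rogers_term_eq hx]
  exact summable_norm_div_one_sub_mul hab hweight (norm_div_lt_one hyx)

variable [CompleteSpace 𝕜]

theorem tsum_lambert_rogers (hl : ‖l‖ ≤ 1) (hyx : ‖y‖ < ‖x‖)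
    (ha : Summable fun n => ‖a n * (t * x) ^ n‖) (hb : Summable fun m => ‖b m * (s * x) ^ m‖) :
    ∑' n : ℕ, ∑' m : ℕ,
        a n * b m * (x ^ (n + m + 1) / (x - l ^ (n + m) * y) * t ^ n * s ^ m) =
      ∑' k : ℕ, (y / x) ^ k *
        ((∑' n, a n * (l ^ k * t * x) ^ n) * ∑' m, b m * (l ^ k * s * x) ^ m) := by
  have hx : x ≠ 0 := norm_pos_iff.mp ((norm_nonneg y).trans_lt hyx)
  have hab := ha.mul_norm hb
  have hweight (p : ℕ × ℕ) : ‖l ^ (p.1 + p.2)‖ ≤ 1 := norm_pow_le_one hl _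
  calc
    _ = ∑' p : ℕ × ℕ, a p.1 * b p.2 *
          (x ^ (p.1 + p.2 + 1) / (x - l ^ (p.1 + p.2) * y) * t ^ p.1 * s ^ p.2) :=
      (summable_norm_lambert_rogers hl hyx ha hb).of_norm.tsum_prod.symm
    _ = ∑' p : ℕ × ℕ, a p.1 * (t * x) ^ p.1 * (b p.2 * (s * x) ^ p.2) /
          (1 - l ^ (p.1 + p.2) * (y / x)) := by
      simp only [lambert_rogers_term_eq hx]
    _ = ∑' k : ℕ, (y / x) ^ k * ∑' p : ℕ × ℕ,
          a p.1 * (t * x) ^ p.1 * (b p.2 * (s * x) ^ p.2) * (l ^ (p.1 + p.2)) ^ k :=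
      tsum_div_one_sub_mul hab hweight (norm_div_lt_one hyx)
    _ = ∑' k : ℕ, (y / x) ^ k * ((∑' n, a n * (t * x) ^ n * (l ^ k) ^ n) *
          ∑' m, b m * (s * x) ^ m * (l ^ k) ^ m) := by
      refine tsum_congr fun k => ?_
      simp only [pow_right_comm l _ k, tsum_mul_mul_pow_add ha hb (norm_pow_le_one hl k)]
    _ = _ := by
      simp only [mul_assoc, mul_comm (l ^ _), mul_pow]

theorem generalized_lambert_rogers_geometric_general (hl : ‖l‖ ≤ 1)
    (hyx : ‖y‖ < ‖x‖) (htx : ‖t * x‖ < 1) (hsx : ‖s * x‖ < 1) :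
    Summable (fun p : ℕ × ℕ =>
      ‖x ^ (p.1 + p.2 + 1) / (x - l ^ (p.1 + p.2) * y) * t ^ p.1 * s ^ p.2‖) ∧
    ∑' n : ℕ, ∑' m : ℕ, x ^ (n + m + 1) / (x - l ^ (n + m) * y) * t ^ n * s ^ m
      = ∑' k : ℕ, (y / x) ^ k / ((1 - l ^ k * t * x) * (1 - l ^ k * s * x)) := by
  have hsummable {z : 𝕜} (hz : ‖z‖ < 1) : Summable fun n : ℕ => ‖1 * z ^ n‖ := by
    simpa only [one_mul] using summable_norm_geometric_of_norm_lt_one hz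
  have hgeom {z : 𝕜} (hz : ‖z * x‖ < 1) (k : ℕ) :
      ∑' n : ℕ, (l ^ k * z * x) ^ n = (1 - l ^ k * z * x)⁻¹ := by
    refine tsum_geometric_of_norm_lt_one ?_
    rw [mul_assoc]
    exact norm_mul_lt_one (norm_pow_le_one hl k) hz
  constructor
  · simpa only [one_mul] using
      summable_norm_lambert_rogers hl hyx (hsummable htx) (hsummable hsx)
  · simpa only [one_mul, hgeom htx, hgeom hsx, div_eq_mul_inv, mul_inv] using
      tsum_lambert_rogers hl hyx (hsummable htx) (hsummable hsx)

end LambertRogers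

/-- Rogers-type generalized Lambert series for the constant sequences `aₙ = bₘ = 1`. -/
theorem generalized_lambert_rogers_geometric (l x y t s : ℂ)
    (hl : ‖l‖ < 1) (hyx : ‖y‖ < ‖x‖) (htx : ‖t * x‖ < 1) (hsx : ‖s * x‖ < 1) :
    Summable (fun p : ℕ × ℕ =>
      ‖x ^ (p.1 + p.2 + 1) / (x - l ^ (p.1 + p.2) * y) * t ^ p.1 * s ^ p.2‖) ∧
    ∑' n : ℕ, ∑' m : ℕ, x ^ (n + m + 1) / (x - l ^ (n + m) * y) * t ^ n * s ^ m
      = ∑' k : ℕ, (y / x) ^ k / ((1 - l ^ k * t * x) * (1 - l ^ k * s * x)) :=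
  generalized_lambert_rogers_geometric_general hl.le hyx htx hsx
end

section
/- Let s, t be complex numbers with s² + 4t ≠ 0 and t ≠ 0, and let φ = (s + √(s²+4t))/2 and ψ = (s − √(s²+4t))/2 be the two roots of X² − sX − t = 0 (so φ ≠ ψ). Let u : ℕ → ℂ be the Lucas sequence defined by u(0) = 0, u(1) = 1, u(n+2) = s·u(n+1) + t·u(n). Let λ, x, y, z be complex numbers with |λ| < 1, |y| < |x|, |φ·x·z| < 1, and |ψ·x·z| < 1. Then ∑_{n=0}^∞ u(n) · x^{n+1}/(x − λ^n y) · z^n = (1/(φ − ψ)) · ∑_{k=0}^∞ (y/x)^k · (1/(1 − φ λ^k x z) − 1/(1 − ψ λ^k x z)). -/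
/-!
Expand `1 / (1 - lⁿ q)`, with `q = y / x`, as a geometric series in `q`. The resulting double series
converges absolutely, and summing it over `n` first leaves the powers `qᵏ` weighted by the
generating function of `u` at `lᵏ x z`, which Binet's formula evaluates.
-/

section Lambert

variable {𝕜 : Type*} [NormedField 𝕜] {l q : 𝕜}

theorem norm_pow_mul_le (hl : ‖l‖ ≤ 1) (q : 𝕜) (n : ℕ) : ‖l ^ n * q‖ ≤ ‖q‖ := by
  rw [norm_mul, norm_pow]
  exact mul_le_of_le_one_left (norm_nonneg q) (pow_le_one₀ (norm_nonneg l) hl)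

variable [CompleteSpace 𝕜] {a : ℕ → 𝕜}

theorem summable_mul_pow_mul_pow (ha : Summable fun n ↦ ‖a n‖) (hl : ‖l‖ ≤ 1) (hq : ‖q‖ < 1) :
    Summable (Function.uncurry fun n k : ℕ ↦ a n * (l ^ n * q) ^ k) := by
  refine .of_norm_bounded (ha.mul_norm (summable_norm_geometric_of_norm_lt_one hq)) fun p ↦ ?_
  simp only [Function.uncurry, norm_mul (a _), norm_pow]
  gcongr
  exact norm_pow_mul_le hl q p.1

theorem tsum_mul_inv_one_sub_pow_mul (ha : Summable fun n ↦ ‖a n‖) (hl : ‖l‖ ≤ 1)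
    (hq : ‖q‖ < 1) :
    ∑' n, a n * (1 - l ^ n * q)⁻¹ = ∑' k : ℕ, q ^ k * ∑' n, a n * (l ^ k) ^ n :=
  calc
    ∑' n, a n * (1 - l ^ n * q)⁻¹ = ∑' n, ∑' k : ℕ, a n * (l ^ n * q) ^ k := by
      simp only [tsum_mul_left,
        tsum_geometric_of_norm_lt_one ((norm_pow_mul_le hl q _).trans_lt hq)]
    _ = ∑' k : ℕ, ∑' n, a n * (l ^ n * q) ^ k := (summable_mul_pow_mul_pow ha hl hq).tsum_comm.symm
    _ = ∑' k : ℕ, q ^ k * ∑' n, a n * (l ^ k) ^ n := by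
      simp only [← tsum_mul_left]
      refine tsum_congr fun k ↦ tsum_congr fun n ↦ ?_
      ring

theorem tsum_mul_pow_succ_div_sub_pow_mul {x y z : 𝕜} (ha : Summable fun n ↦ ‖a n * (x * z) ^ n‖)
    (hl : ‖l‖ ≤ 1) (hyx : ‖y‖ < ‖x‖) :
    ∑' n, a n * (x ^ (n + 1) / (x - l ^ n * y)) * z ^ n
      = ∑' k : ℕ, (y / x) ^ k * ∑' n, a n * (l ^ k * (x * z)) ^ n := by
  have hx_pos : 0 < ‖x‖ := (norm_nonneg y).trans_lt hyx
  have hx : x ≠ 0 := norm_pos_iff.mp hx_pos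
  have hq : ‖y / x‖ < 1 := by rwa [norm_div, div_lt_one hx_pos]
  have hdiv (n : ℕ) : x ^ (n + 1) / (x - l ^ n * y) = x ^ n * (1 - l ^ n * (y / x))⁻¹ := by
    rw [show x - l ^ n * y = x * (1 - l ^ n * (y / x)) by field_simp, pow_succ',
      mul_div_mul_left _ _ hx, div_eq_mul_inv]
  calc
    ∑' n, a n * (x ^ (n + 1) / (x - l ^ n * y)) * z ^ n
        = ∑' n, a n * (x * z) ^ n * (1 - l ^ n * (y / x))⁻¹ := by
      refine tsum_congr fun n ↦ ?_
      rw [hdiv]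
      ring
    _ = ∑' k : ℕ, (y / x) ^ k * ∑' n, a n * (x * z) ^ n * (l ^ k) ^ n :=
      tsum_mul_inv_one_sub_pow_mul ha hl hq
    _ = ∑' k : ℕ, (y / x) ^ k * ∑' n, a n * (l ^ k * (x * z)) ^ n := by
      simp only [mul_assoc, ← mul_pow, mul_comm (x * z)]

end Lambert

section Lucas

theorem sub_mul_lucas_eq_pow_sub_pow {R : Type*} [CommRing R] {s t φ ψ : R} {u : ℕ → R}
    (hφ : φ ^ 2 = s * φ + t) (hψ : ψ ^ 2 = s * ψ + t) (hu0 : u 0 = 0) (hu1 : u 1 = 1)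
    (hrec : ∀ n, u (n + 2) = s * u (n + 1) + t * u n) (n : ℕ) :
    (φ - ψ) * u n = φ ^ n - ψ ^ n := by
  induction n using Nat.twoStepInduction with
  | zero => simp [hu0]
  | one => simp [hu1]
  | more n ih ih_succ =>
    rw [hrec]
    linear_combination s * ih_succ + t * ih - φ ^ n * hφ + ψ ^ n * hψ

theorem mul_pow_eq_of_binet {K : Type*} [Field K] {φ ψ : K} {u : ℕ → K} (hφψ : φ ≠ ψ)
    (hu : ∀ n, (φ - ψ) * u n = φ ^ n - ψ ^ n) (w : K) (n : ℕ) :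
    u n * w ^ n = 1 / (φ - ψ) * ((φ * w) ^ n - (ψ * w) ^ n) := by
  rw [mul_pow, mul_pow, ← sub_mul, ← hu, ← mul_assoc, one_div,
    inv_mul_cancel_left₀ (sub_ne_zero.mpr hφψ)]

variable {𝕜 : Type*} [NormedField 𝕜] {φ ψ w : 𝕜} {u : ℕ → 𝕜}

theorem summable_norm_mul_pow_of_binet (hφψ : φ ≠ ψ) (hu : ∀ n, (φ - ψ) * u n = φ ^ n - ψ ^ n)
    (hφw : ‖φ * w‖ < 1) (hψw : ‖ψ * w‖ < 1) : Summable fun n ↦ ‖u n * w ^ n‖ := by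
  simp only [mul_pow_eq_of_binet hφψ hu, norm_mul (1 / (φ - ψ))]
  have hsum := (summable_norm_geometric_of_norm_lt_one hφw).add
    (summable_norm_geometric_of_norm_lt_one hψw)
  exact (hsum.of_nonneg_of_le (fun _ ↦ norm_nonneg _) fun _ ↦ norm_sub_le _ _).mul_left _

theorem hasSum_mul_pow_of_binet (hφψ : φ ≠ ψ) (hu : ∀ n, (φ - ψ) * u n = φ ^ n - ψ ^ n)
    (hφw : ‖φ * w‖ < 1) (hψw : ‖ψ * w‖ < 1) :
    HasSum (fun n ↦ u n * w ^ n) (1 / (φ - ψ) * (1 / (1 - φ * w) - 1 / (1 - ψ * w))) := by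
  simp only [mul_pow_eq_of_binet hφψ hu]
  simpa only [one_div] using ((hasSum_geometric_of_norm_lt_one hφw).sub
    (hasSum_geometric_of_norm_lt_one hψw)).mul_left _

end Lucas

theorem generalized_lambert_lucas_general {𝕜 : Type*} [NormedField 𝕜] [CompleteSpace 𝕜]
    {s t φ ψ : 𝕜} (hφ : φ ^ 2 = s * φ + t) (hψ : ψ ^ 2 = s * ψ + t) (hφψ : φ ≠ ψ)
    {u : ℕ → 𝕜} (hu0 : u 0 = 0) (hu1 : u 1 = 1)
    (hrec : ∀ n, u (n + 2) = s * u (n + 1) + t * u n)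
    {l x y z : 𝕜} (hl : ‖l‖ ≤ 1) (hyx : ‖y‖ < ‖x‖)
    (hφxz : ‖φ * x * z‖ < 1) (hψxz : ‖ψ * x * z‖ < 1) :
    ∑' n, u n * (x ^ (n + 1) / (x - l ^ n * y)) * z ^ n
      = 1 / (φ - ψ) * ∑' k : ℕ, (y / x) ^ k *
          (1 / (1 - φ * l ^ k * x * z) - 1 / (1 - ψ * l ^ k * x * z)) := by
  rw [mul_assoc] at hφxz hψxz
  have hbinet := sub_mul_lucas_eq_pow_sub_pow hφ hψ hu0 hu1 hrec
  have hgen (k : ℕ) := hasSum_mul_pow_of_binet (w := l ^ k * (x * z)) hφψ hbinet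
    (by rw [mul_left_comm]; exact (norm_pow_mul_le hl _ k).trans_lt hφxz)
    (by rw [mul_left_comm]; exact (norm_pow_mul_le hl _ k).trans_lt hψxz)
  rw [tsum_mul_pow_succ_div_sub_pow_mul
    (summable_norm_mul_pow_of_binet hφψ hbinet hφxz hψxz) hl hyx]
  calc
    ∑' k : ℕ, (y / x) ^ k * ∑' n, u n * (l ^ k * (x * z)) ^ n
        = ∑' k : ℕ, 1 / (φ - ψ) * ((y / x) ^ k *
            (1 / (1 - φ * l ^ k * x * z) - 1 / (1 - ψ * l ^ k * x * z))) := by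
      refine tsum_congr fun k ↦ ?_
      rw [(hgen k).tsum_eq]
      ring
    _ = _ := tsum_mul_left

/-- Generalized Lambert series for the Lucas sequence `u` on parameters `s, t`,
where `φ = (s + √(s²+4t))/2` and `ψ = (s − √(s²+4t))/2` are the two roots of
`X² − sX − t = 0` (here `δ` denotes a complex square root of `s² + 4t`). -/
theorem generalized_lambert_lucas (s t : ℂ) (hdisc : s ^ 2 + 4 * t ≠ 0) (ht : t ≠ 0)
    (δ φ ψ : ℂ) (hδ : δ ^ 2 = s ^ 2 + 4 * t)
    (hφ : φ = (s + δ) / 2) (hψ : ψ = (s - δ) / 2)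
    (u : ℕ → ℂ) (hu0 : u 0 = 0) (hu1 : u 1 = 1)
    (hrec : ∀ n, u (n + 2) = s * u (n + 1) + t * u n)
    (l x y z : ℂ) (hl : ‖l‖ < 1) (hyx : ‖y‖ < ‖x‖)
    (hφxz : ‖φ * x * z‖ < 1) (hψxz : ‖ψ * x * z‖ < 1) :
    ∑' n : ℕ, u n * (x ^ (n + 1) / (x - l ^ n * y)) * z ^ n
      = (1 / (φ - ψ)) * ∑' k : ℕ, (y / x) ^ k *
          (1 / (1 - φ * l ^ k * x * z) - 1 / (1 - ψ * l ^ k * x * z)) := by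
  have hφψ : φ ≠ ψ := by
    rintro rfl
    exact hdisc (by linear_combination -hδ + (hψ - hφ) * δ)
  exact generalized_lambert_lucas_general (by subst hφ; linear_combination hδ / 4)
    (by subst hψ; linear_combination hδ / 4) hφψ hu0 hu1 hrec hl.le hyx hφxz hψxz
end
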